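/- Let A = (a_{ij}) ∈ ℝ^{N×N} be a nonzero skew-symmetric matrix, a := max_{i,j} |a_{ij}|, and t > 0. Let x_{ij}, 1 ≤ i < j ≤ N, be independent standard Gaussian random variables, set x_{ji} := x_{ij}, and let Y_A := (a_{ij} x_{ij}). Then for every r > 0, Pr( |log det(√t I_N + Y_A) − E log det(√t I_N + Y_A)| ≥ N r ) ≤ 2 exp(−t N r² / (2a²)). -/

import Mathlib

/-!
Write `F ξ = log det (√t I + Y_A ξ)`. The bound is Gaussian concentration for the Lipschitz
function `F`, in the form obtained from the Prékopa–Leindler inequality.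

*Lipschitz constant.* For `M = √t I + Y` with `Y` skew-symmetric, the derivative of `log det` in a
skew-symmetric direction `D` is `tr (M⁻¹ D)`. The matrix `2 √t M⁻¹ - I` is orthogonal (it is the
Cayley transform of `Y`), and `tr D = 0`, so `tr (M⁻¹ D) = tr ((M⁻¹ - I / (2 √t)) D)`, and
Cauchy–Schwarz bounds its square by `N / (4 t) * ‖D‖²` in the Frobenius norm
(`trace_inv_mul_sq_le`). Along the segment from `η` to `ξ` one has
`‖D‖² ≤ 2 a² |ξ - η|²`, whence `(F ξ - F η)² ≤ V |ξ - η|²` with `V = N a² / (2 t)`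
(`logDet_lipschitz`).

*Concentration.* The Prékopa–Leindler inequality on the line yields the following property of
the standard Gaussian measure `γ`: if `f x * g y ≤ C exp (|x - y|² / 4)` for all `x`, `y`, then
`∫ f dγ * ∫ g dγ ≤ C`. Because of the free constant `C` it passes to products by Fubini
(`gaussian_pi_lintegral_mul_le`). For `f = exp (c F)` and `g = exp (-c F)` it gives
`E exp (c F) * E exp (-c F) ≤ exp (c² V)`; Jensen's inequality turns this into
`E exp (c (F - E F)) ≤ exp (c² V)`, and the Chernoff bound into
`P (|F - E F| ≥ s) ≤ 2 exp (-s² / (4 V))` (`gaussian_concentration`). With `s = N r` the exponent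
is `-t N r² / (2 a²)`.
-/

open MeasureTheory ProbabilityTheory Matrix

/-- Total weighted `k`-matching of the weighted graph encoded by the
skew-symmetric matrix `A`. -/
noncomputable def phiW {N : ℕ} (A : Matrix (Fin N) (Fin N) ℝ) (k : ℕ) : ℝ :=
  ∑ M ∈ Finset.univ.filter
      (fun M : Finset (Fin N × Fin N) =>
        ((∀ p ∈ M, p.1 < p.2) ∧
          ∀ p ∈ M, ∀ q ∈ M, p ≠ q →
            p.1 ≠ q.1 ∧ p.1 ≠ q.2 ∧ p.2 ≠ q.1 ∧ p.2 ≠ q.2) ∧ M.card = k),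
    ∏ p ∈ M, (A p.1 p.2) ^ 2

/-- The weighted matching polynomial `Φ(t, A)`. -/
noncomputable def PhiW {N : ℕ} (A : Matrix (Fin N) (Fin N) ℝ) (t : ℝ) : ℝ :=
  ∑ k ∈ Finset.range (N / 2 + 1), phiW A k * t ^ (N / 2 - k)

/-- `Φ(t,A)`, multiplied by `√t` when `N` is odd. -/
noncomputable def PhiFull {N : ℕ} (A : Matrix (Fin N) (Fin N) ℝ) (t : ℝ) : ℝ :=
  (if Even N then 1 else Real.sqrt t) * PhiW A t

/-- Index type of the strictly upper-triangular positions. -/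
abbrev PairIdx (N : ℕ) := {p : Fin N × Fin N // p.1 < p.2}

/-- The canonical product of standard Gaussian measures, one for each edge slot. -/
noncomputable def gaussPi (N : ℕ) : Measure (PairIdx N → ℝ) :=
  Measure.pi fun _ => gaussianReal 0 1

/-- The sample `Y_A(ξ)` of the random skew-symmetric matrix `Y_A`. -/
noncomputable def sampleY {N : ℕ} (A : Matrix (Fin N) (Fin N) ℝ)
    (ξ : PairIdx N → ℝ) : Matrix (Fin N) (Fin N) ℝ :=
  Matrix.of fun i j =>
    if h : i < j then A i j * ξ ⟨(i, j), h⟩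
    else if h : j < i then A i j * ξ ⟨(j, i), h⟩
    else 0

/-- `log Φ̃(t, A) = E log det(√t I_N + Y_A)` for i.i.d. standard Gaussian entries. -/
noncomputable def logPhiTilde {N : ℕ} (t : ℝ) (A : Matrix (Fin N) (Fin N) ℝ) : ℝ :=
  ∫ ξ, Real.log ((Real.sqrt t • (1 : Matrix (Fin N) (Fin N) ℝ) + sampleY A ξ).det) ∂(gaussPi N)

/-- The constant `C₁ = -(1/√(2π)) ∫ log(x²) e^{-x²/2} dx`. -/
noncomputable def C1 : ℝ :=
  -(Real.sqrt (2 * Real.pi))⁻¹ * ∫ x : ℝ, Real.log (x ^ 2) * Real.exp (-x ^ 2 / 2)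

/-! ### The Prékopa–Leindler inequality on the line -/

/-- The Brunn–Minkowski inequality on the line, for midpoints: `S` contains `(A + B) / 2`. It need not
be measurable. -/
lemma volume_add_le_two_mul_of_midpoint {A B S : Set ℝ} (hA : MeasurableSet A)
    (hB : MeasurableSet B) (hA0 : A.Nonempty) (hB0 : B.Nonempty)
    (hS : ∀ x ∈ A, ∀ y ∈ B, (x + y) / 2 ∈ S) :
    volume A + volume B ≤ 2 * volume S := by
  have compact_case : ∀ K₁ ⊆ A, ∀ K₂ ⊆ B, IsCompact K₁ → IsCompact K₂ → K₁.Nonempty →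
      K₂.Nonempty → volume K₁ + volume K₂ ≤ 2 * volume S := by
    intro K₁ h₁ K₂ h₂ c₁ c₂ n₁ n₂
    obtain ⟨u, hu, hu'⟩ := c₁.exists_isGreatest n₁
    obtain ⟨v, hv, hv'⟩ := c₂.exists_isLeast n₂
    -- `(K₁ + v) / 2` and `(u + K₂) / 2` both lie in `S` and on opposite sides of `m`.
    set m := (u + v) / 2 with hm
    have scale : ∀ (T : Set ℝ) (c : ℝ), volume ((fun x => (x + c) / 2) ⁻¹' T) = 2 * volume T := by
      intro T c
      have : (fun x : ℝ => (x + c) / 2) ⁻¹' T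
          = (fun x => x + c) ⁻¹' ((fun x => x * (2⁻¹ : ℝ)) ⁻¹' T) := by
        ext x; simp [div_eq_mul_inv]
      rw [this, measure_preimage_add_right, Real.volume_preimage_mul_right (by norm_num)]
      norm_num
    have e₁ : volume K₁ ≤ 2 * volume (S ∩ Set.Iic m) := by
      rw [← scale _ v]
      refine measure_mono fun x hx => ⟨hS x (h₁ hx) v (h₂ hv), ?_⟩
      have := hu' hx
      simp only [Set.mem_Iic, hm]; linarith
    have e₂ : volume K₂ ≤ 2 * volume (S \ Set.Iic m) := by
      have : volume (S ∩ Set.Ici m) ≤ volume (S \ Set.Iic m) := by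
        calc volume (S ∩ Set.Ici m) ≤ volume ((S \ Set.Iic m) ∪ {m}) := by
              refine measure_mono fun x hx => ?_
              rcases eq_or_lt_of_le (show m ≤ x from hx.2) with h | h
              · right; exact h.symm
              · left; exact ⟨hx.1, not_le.2 h⟩
          _ ≤ volume (S \ Set.Iic m) + volume {m} := measure_union_le _ _
          _ = _ := by simp
      refine le_trans ?_ (mul_le_mul_right this 2)
      rw [← scale _ u]
      refine measure_mono fun x hx => ⟨?_, ?_⟩
      · change (x + u) / 2 ∈ S
        rw [add_comm]; exact hS u (h₁ hu) x (h₂ hx)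
      · have := hv' hx
        simp only [Set.mem_Ici, hm]; linarith
    calc _ ≤ 2 * volume (S ∩ Set.Iic m) + 2 * volume (S \ Set.Iic m) := add_le_add e₁ e₂
      _ = 2 * volume S := by rw [← mul_add, measure_inter_add_sdiff _ measurableSet_Iic]
  obtain ⟨a₀, ha₀⟩ := hA0
  obtain ⟨b₀, hb₀⟩ := hB0
  rw [hA.measure_eq_iSup_isCompact, hB.measure_eq_iSup_isCompact]
  simp only [iSup_and']
  rw [iSup_subtype', iSup_subtype']
  have : Nonempty {K : Set ℝ // K ⊆ A ∧ IsCompact K} := ⟨⟨∅, by simp⟩⟩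
  have : Nonempty {K : Set ℝ // K ⊆ B ∧ IsCompact K} := ⟨⟨∅, by simp⟩⟩
  refine ENNReal.iSup_add_iSup_le fun K₁ K₂ => ?_
  -- Adding a point makes the compact sets nonempty.
  refine le_trans (add_le_add (measure_mono (Set.subset_insert a₀ _))
    (measure_mono (Set.subset_insert b₀ _))) ?_
  exact compact_case _ (Set.insert_subset ha₀ K₁.2.1) _ (Set.insert_subset hb₀ K₂.2.1)
    (K₁.2.2.insert _) (K₂.2.2.insert _) ⟨_, Set.mem_insert _ _⟩ ⟨_, Set.mem_insert _ _⟩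

/-- The Prékopa–Leindler inequality on the line for functions with supremum `1`, in its stronger
additive form: Brunn–Minkowski applied to each superlevel set, integrated over the level. -/
lemma lintegral_add_le_of_sup_eq_one {f g h : ℝ → ℝ} (hf : Measurable f) (hg : Measurable g)
    (hh : Measurable h) (f0 : ∀ x, 0 ≤ f x) (g0 : ∀ x, 0 ≤ g x) (h0 : ∀ x, 0 ≤ h x)
    (f1 : ∀ x, f x ≤ 1) (g1 : ∀ x, g x ≤ 1)
    (fs : ∀ s < 1, ∃ x, s < f x) (gs : ∀ s < 1, ∃ x, s < g x)
    (H : ∀ x y, f x * g y ≤ h ((x + y) / 2) ^ 2) :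
    (∫⁻ x, ENNReal.ofReal (f x)) + ∫⁻ x, ENNReal.ofReal (g x)
      ≤ 2 * ∫⁻ x, ENNReal.ofReal (h x) := by
  have meas : ∀ k : ℝ → ℝ, Measurable fun s : ℝ => volume {x | s < k x} := fun k =>
    Antitone.measurable fun s t hst => measure_mono fun x hx => lt_of_le_of_lt hst hx
  rw [lintegral_eq_lintegral_meas_lt _ (.of_forall f0) hf.aemeasurable,
    lintegral_eq_lintegral_meas_lt _ (.of_forall g0) hg.aemeasurable,
    lintegral_eq_lintegral_meas_lt _ (.of_forall h0) hh.aemeasurable,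
    ← lintegral_add_left (meas f), ← lintegral_const_mul _ (meas h)]
  refine setLIntegral_mono (by fun_prop (disch := exact meas h)) fun s (hs : 0 < s) => ?_
  rcases lt_or_ge s 1 with h1 | h1
  · refine volume_add_le_two_mul_of_midpoint (measurableSet_lt measurable_const hf)
      (measurableSet_lt measurable_const hg) (fs s h1) (gs s h1) fun x hx y hy => ?_
    have hx : s < f x := hx
    have hy : s < g y := hy
    refine lt_of_pow_lt_pow_left₀ 2 (h0 _) ?_
    nlinarith [H x y]
  · have e₁ : {x | s < f x} = ∅ := by
      ext x; simpa using (f1 x).trans h1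
    have e₂ : {x | s < g x} = ∅ := by
      ext x; simpa using (g1 x).trans h1
    simp [e₁, e₂]

lemma ENNReal.mul_le_sq_of_add_le {a b c : ENNReal} (h : a + b ≤ 2 * c) : a * b ≤ c ^ 2 := by
  rcases eq_or_ne c ⊤ with rfl | hc
  · simp
  have hab : a + b ≠ ⊤ := ne_top_of_le_ne_top (ENNReal.mul_ne_top (by simp) hc) h
  obtain ⟨ha, hb⟩ := ENNReal.add_ne_top.1 hab
  lift a to NNReal using ha
  lift b to NNReal using hb
  lift c to NNReal using hc
  norm_cast at h ⊢
  have h' : (a : ℝ) + b ≤ 2 * c := by exact_mod_cast h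
  have : (a : ℝ) * b ≤ c ^ 2 := by
    nlinarith [sq_nonneg ((a : ℝ) - b), a.2, b.2, c.2, mul_self_le_mul_self (add_nonneg a.2 b.2) h']
  exact_mod_cast this

/-- The Prékopa–Leindler inequality on the line (with weight `1/2`) for bounded functions, by rescaling
`f` and `g` to have supremum `1`. -/
lemma prekopa_leindler_bounded {f g h : ℝ → ℝ} (hf : Measurable f) (hg : Measurable g)
    (hh : Measurable h) (f0 : ∀ x, 0 ≤ f x) (g0 : ∀ x, 0 ≤ g x) (h0 : ∀ x, 0 ≤ h x)
    (bf : BddAbove (Set.range f)) (bg : BddAbove (Set.range g))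
    (H : ∀ x y, f x * g y ≤ h ((x + y) / 2) ^ 2) :
    (∫⁻ x, ENNReal.ofReal (f x)) * ∫⁻ x, ENNReal.ofReal (g x)
      ≤ (∫⁻ x, ENNReal.ofReal (h x)) ^ 2 := by
  have degenerate : ∀ k : ℝ → ℝ, BddAbove (Set.range k) → (∀ x, 0 ≤ k x) →
      (⨆ x, k x) ≤ 0 → ∫⁻ x, ENNReal.ofReal (k x) = 0 := by
    intro k bk k0 hk
    have : ∀ x, k x = 0 := fun x => le_antisymm ((le_ciSup bk x).trans hk) (k0 x)
    simp [this]
  rcases le_or_gt (⨆ x, f x) 0 with hF | hF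
  · simp [degenerate f bf f0 hF]
  rcases le_or_gt (⨆ x, g x) 0 with hG | hG
  · simp [degenerate g bg g0 hG]
  set F := ⨆ x, f x with hFdef
  set G := ⨆ x, g x with hGdef
  have approx : ∀ (k : ℝ → ℝ), 0 < (⨆ x, k x) → ∀ s < 1, ∃ x, s < k x / ⨆ x, k x := by
    intro k hk s hs
    have : s * (⨆ x, k x) < ⨆ x, k x := by nlinarith
    obtain ⟨x, hx⟩ := exists_lt_of_lt_ciSup this
    exact ⟨x, (lt_div_iff₀ hk).2 hx⟩
  have hFG : 0 < √(F * G) := Real.sqrt_pos.2 (mul_pos hF hG)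
  have key := ENNReal.mul_le_sq_of_add_le (lintegral_add_le_of_sup_eq_one
    (f := fun x => f x / F) (g := fun x => g x / G)
    (h := fun x => h x / √(F * G)) (hf.div_const _) (hg.div_const _) (hh.div_const _)
    (fun x => div_nonneg (f0 x) hF.le) (fun x => div_nonneg (g0 x) hG.le)
    (fun x => div_nonneg (h0 x) hFG.le)
    (fun x => (div_le_one hF).2 (le_ciSup bf x)) (fun x => (div_le_one hG).2 (le_ciSup bg x))
    (approx f hF) (approx g hG) (fun x y => by
      rw [div_pow, Real.sq_sqrt (mul_pos hF hG).le, div_mul_div_comm]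
      exact div_le_div_of_nonneg_right (H x y) (mul_pos hF hG).le))
  have scale : ∀ (k : ℝ → ℝ) (c : ℝ), Measurable k → 0 < c →
      ∫⁻ x, ENNReal.ofReal (k x) = ENNReal.ofReal c * ∫⁻ x, ENNReal.ofReal (k x / c) := by
    intro k c hk hc
    rw [← lintegral_const_mul _ (by fun_prop)]
    refine lintegral_congr fun x => ?_
    rw [← ENNReal.ofReal_mul hc.le, mul_div_cancel₀ _ hc.ne']
  rw [scale f F hf hF, scale g G hg hG, scale h _ hh hFG, mul_pow, ← ENNReal.ofReal_pow hFG.le,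
    Real.sq_sqrt (mul_pos hF hG).le, ENNReal.ofReal_mul hF.le, mul_mul_mul_comm]
  gcongr

/-- Maurey's property (τ) of the standard Gaussian measure on the line, as a statement about two
functions. It is Prékopa–Leindler for `f φ`, `g φ` and `√C φ`, where the Gaussian density `φ` satisfies
`exp ((x - y)² / 4) φ(x) φ(y) = φ((x + y) / 2)²`; truncation removes the boundedness assumption. -/
lemma gaussianReal_lintegral_mul_le (C : ENNReal) {f g : ℝ → ENNReal} (hf : Measurable f)
    (hg : Measurable g)
    (H : ∀ x y, f x * g y ≤ C * ENNReal.ofReal (Real.exp ((x - y) ^ 2 / 4))) :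
    (∫⁻ x, f x ∂gaussianReal 0 1) * ∫⁻ x, g x ∂gaussianReal 0 1 ≤ C := by
  rcases eq_or_ne C ⊤ with rfl | hC
  · simp
  have trunc : ∀ k : ℝ → ENNReal, Measurable k → ∫⁻ x, k x ∂gaussianReal 0 1
      = ⨆ n : ℕ, ∫⁻ x, min (k x) n ∂gaussianReal 0 1 := by
    intro k hk
    rw [← lintegral_iSup (by fun_prop)]
    · refine lintegral_congr fun x => ?_
      rw [← inf_iSup_eq, ENNReal.iSup_natCast, inf_top_eq]
    · intro m n hmn x
      exact min_le_min le_rfl (by exact_mod_cast hmn)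
  rw [trunc f hf, trunc g hg, ENNReal.iSup_mul]
  refine iSup_le fun m => ?_
  rw [ENNReal.mul_iSup]
  refine iSup_le fun n => ?_
  set φ := gaussianPDFReal 0 1 with hφ
  have φ0 : ∀ x, 0 ≤ φ x := gaussianPDFReal_nonneg 0 1
  have φm : Measurable φ := measurable_gaussianPDFReal 0 1
  have φb : ∀ x, φ x ≤ (√(2 * Real.pi))⁻¹ := by
    intro x
    simp only [hφ, gaussianPDFReal]
    norm_num
    refine mul_le_of_le_one_right (by positivity) (Real.exp_le_one_iff.2 ?_)
    have := sq_nonneg x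
    linarith
  have φmid : ∀ x y, Real.exp ((x - y) ^ 2 / 4) * (φ x * φ y) = φ ((x + y) / 2) ^ 2 := by
    intro x y
    simp only [hφ, gaussianPDFReal]
    norm_num
    have : ∀ c a b d e : ℝ, a + b + d = 2 * e →
        Real.exp a * (c * Real.exp b * (c * Real.exp d)) = (c * Real.exp e) ^ 2 := by
      intro c a b d e h
      rw [mul_pow, ← Real.exp_nat_mul, Nat.cast_ofNat, ← h, Real.exp_add, Real.exp_add]; ring
    simpa using this ((√Real.pi)⁻¹ * (√2)⁻¹) _ _ _ _ (by ring)
  have conv : ∀ (k : ℝ → ENNReal) (n : ℕ), Measurable k →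
      ∫⁻ x, min (k x) n ∂gaussianReal 0 1
        = ∫⁻ x, ENNReal.ofReal ((min (k x) n).toReal * φ x) := by
    intro k n hk
    rw [gaussianReal_of_var_ne_zero _ one_ne_zero,
      lintegral_withDensity_eq_lintegral_mul _ (measurable_gaussianPDF 0 1) (by fun_prop)]
    refine lintegral_congr fun x => ?_
    rw [ENNReal.ofReal_mul ENNReal.toReal_nonneg, ENNReal.ofReal_toReal (by simp), mul_comm]
    rfl
  have bdd : ∀ (k : ℝ → ENNReal) (n : ℕ),
      BddAbove (Set.range fun x => (min (k x) n).toReal * φ x) := by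
    intro k n
    refine ⟨n * (√(2 * Real.pi))⁻¹, ?_⟩
    rintro _ ⟨x, rfl⟩
    refine mul_le_mul ?_ (φb x) (φ0 x) (by positivity)
    exact ENNReal.toReal_le_of_le_ofReal (by positivity) (by simp)
  rw [conv f m hf, conv g n hg]
  refine (prekopa_leindler_bounded (h := fun x => √C.toReal * φ x) (by fun_prop) (by fun_prop)
    (by fun_prop) (fun x => mul_nonneg ENNReal.toReal_nonneg (φ0 x))
    (fun x => mul_nonneg ENNReal.toReal_nonneg (φ0 x))
    (fun x => mul_nonneg (Real.sqrt_nonneg _) (φ0 x)) (bdd f m) (bdd g n) ?_).trans ?_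
  · intro x y
    rw [mul_pow, Real.sq_sqrt ENNReal.toReal_nonneg, ← φmid, mul_mul_mul_comm, ← mul_assoc C.toReal]
    refine mul_le_mul_of_nonneg_right ?_ (mul_nonneg (φ0 x) (φ0 y))
    rw [← ENNReal.toReal_mul, ← ENNReal.toReal_ofReal (Real.exp_pos ((x - y) ^ 2 / 4)).le,
      ← ENNReal.toReal_mul]
    exact ENNReal.toReal_mono (ENNReal.mul_ne_top hC (by simp))
      ((mul_le_mul' (min_le_left _ _) (min_le_left _ _)).trans (H x y))
  · simp_rw [ENNReal.ofReal_mul (Real.sqrt_nonneg _)]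
    rw [lintegral_const_mul _ (by fun_prop), hφ, lintegral_gaussianPDFReal_eq_one 0 one_ne_zero,
      mul_one, ← ENNReal.ofReal_pow (Real.sqrt_nonneg _), Real.sq_sqrt ENNReal.toReal_nonneg,
      ENNReal.ofReal_toReal hC]

/-! ### Gaussian concentration -/

/-- Property (τ) of the standard Gaussian measure on `Fin n → ℝ`. In the induction step the inner
integrals satisfy the one-dimensional hypothesis because `C` may absorb the factor coming from the
first coordinate. -/
lemma gaussian_fin_lintegral_mul_le (n : ℕ) : ∀ (C : ENNReal) {f g : (Fin n → ℝ) → ENNReal},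
    Measurable f → Measurable g →
    (∀ x y, f x * g y ≤ C * ENNReal.ofReal (Real.exp ((∑ i, (x i - y i) ^ 2) / 4))) →
    (∫⁻ x, f x ∂Measure.pi fun _ => gaussianReal 0 1) *
      (∫⁻ x, g x ∂Measure.pi fun _ => gaussianReal 0 1) ≤ C := by
  induction n with
  | zero =>
    intro C f g hf hg H
    rw [Measure.pi_of_empty, lintegral_dirac, lintegral_dirac]
    simpa using H _ _
  | succ n ih =>
    intro C f g hf hg H
    set e := MeasurableEquiv.piFinSuccAbove (fun _ : Fin (n + 1) => ℝ) 0 with he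
    have mp : MeasurePreserving e.symm _ _ :=
      (measurePreserving_piFinSuccAbove (fun _ : Fin (n + 1) => gaussianReal 0 1) 0).symm
    have split : ∀ k : (Fin (n + 1) → ℝ) → ENNReal, Measurable k →
        ∫⁻ x, k x ∂(Measure.pi fun _ => gaussianReal 0 1)
          = ∫⁻ u, ∫⁻ v, k (e.symm (u, v)) ∂(Measure.pi fun _ => gaussianReal 0 1)
              ∂gaussianReal 0 1 := by
      intro k hk
      rw [← mp.lintegral_comp hk, lintegral_prod _ (by fun_prop)]
    rw [split f hf, split g hg]
    refine gaussianReal_lintegral_mul_le C ?_ ?_ fun u u' => ?_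
    · exact (hf.comp e.symm.measurable).lintegral_prod_right'
    · exact (hg.comp e.symm.measurable).lintegral_prod_right'
    · refine ih _ (by fun_prop) (by fun_prop) fun v v' => (H _ _).trans (le_of_eq ?_)
      rw [mul_assoc, ← ENNReal.ofReal_mul (Real.exp_pos _).le, ← Real.exp_add, ← add_div,
        Fin.sum_univ_succ]
      rfl

lemma gaussian_pi_lintegral_mul_le {ι : Type*} [Fintype ι] (C : ENNReal)
    {f g : (ι → ℝ) → ENNReal} (hf : Measurable f) (hg : Measurable g)
    (H : ∀ x y, f x * g y ≤ C * ENNReal.ofReal (Real.exp ((∑ i, (x i - y i) ^ 2) / 4))) :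
    (∫⁻ x, f x ∂Measure.pi fun _ => gaussianReal 0 1) *
      (∫⁻ x, g x ∂Measure.pi fun _ => gaussianReal 0 1) ≤ C := by
  set σ := (Fintype.equivFin ι).symm
  have mp := measurePreserving_piCongrLeft (α := fun _ : ι => ℝ) (fun _ => gaussianReal 0 1) σ
  set e := MeasurableEquiv.piCongrLeft (fun _ : ι => ℝ) σ
  rw [← mp.lintegral_comp hf, ← mp.lintegral_comp hg]
  refine gaussian_fin_lintegral_mul_le _ C (by fun_prop) (by fun_prop) fun x y =>
    (H _ _).trans (le_of_eq ?_)
  rw [← σ.sum_comp]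
  have : ∀ (z : Fin (Fintype.card ι) → ℝ) (i), e z (σ i) = z i := fun z i =>
    Equiv.piCongrLeft_apply_apply (fun _ : ι => ℝ) σ z i
  simp only [this]

/-- Gaussian concentration for a function that is `√V`-Lipschitz in the Euclidean distance. The
constant `4` in place of the optimal `2` is what property (τ) gives. -/
lemma gaussian_concentration {ι : Type*} [Fintype ι] {F : (ι → ℝ) → ℝ} (hF : Measurable F)
    {V : ℝ} (hV : 0 < V) (hL : ∀ x y, (F x - F y) ^ 2 ≤ V * ∑ i, (x i - y i) ^ 2)
    {s : ℝ} (hs : 0 ≤ s) :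
    (Measure.pi fun _ : ι => gaussianReal 0 1)
        {x | s ≤ |F x - ∫ y, F y ∂Measure.pi fun _ : ι => gaussianReal 0 1|}
      ≤ ENNReal.ofReal (2 * Real.exp (-s ^ 2 / (4 * V))) := by
  set μ : Measure (ι → ℝ) := Measure.pi fun _ : ι => gaussianReal 0 1 with hμ
  have prod_le : ∀ c : ℝ, (∫⁻ x, ENNReal.ofReal (Real.exp (c * F x)) ∂μ) *
      ∫⁻ x, ENNReal.ofReal (Real.exp (-c * F x)) ∂μ ≤ ENNReal.ofReal (Real.exp (c ^ 2 * V)) := by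
    intro c
    refine gaussian_pi_lintegral_mul_le _ (by fun_prop) (by fun_prop) fun x y => ?_
    rw [← ENNReal.ofReal_mul (Real.exp_pos _).le, ← ENNReal.ofReal_mul (Real.exp_pos _).le,
      ← Real.exp_add, ← Real.exp_add]
    refine ENNReal.ofReal_le_ofReal (Real.exp_le_exp.2 ?_)
    -- Young inequality `c u ≤ c² V + u² / (4 V)` for `u = F x - F y`
    have young : c * (F x - F y) ≤ c ^ 2 * V + (F x - F y) ^ 2 / (4 * V) := by
      have : c ^ 2 * V + (F x - F y) ^ 2 / (4 * V) - c * (F x - F y)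
          = (2 * V * c - (F x - F y)) ^ 2 / (4 * V) := by field_simp; ring
      have : 0 ≤ (2 * V * c - (F x - F y)) ^ 2 / (4 * V) := by positivity
      linarith
    have : (F x - F y) ^ 2 / (4 * V) ≤ (∑ i, (x i - y i) ^ 2) / 4 := by
      rw [div_le_div_iff₀ (by positivity) (by positivity)]
      nlinarith [hL x y]
    linarith
  have pos : ∀ c : ℝ, ∫⁻ x, ENNReal.ofReal (Real.exp (c * F x)) ∂μ ≠ 0 := by
    intro c h
    rw [lintegral_eq_zero_iff (by fun_prop)] at h
    obtain ⟨x, hx⟩ := h.exists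
    simp only [Pi.zero_apply, ENNReal.ofReal_eq_zero] at hx
    exact absurd (Real.exp_pos _) (not_lt.2 hx)
  have exp_int : ∀ c : ℝ, Integrable (fun x => Real.exp (c * F x)) μ := by
    intro c
    refine ⟨by fun_prop, ?_⟩
    rw [hasFiniteIntegral_iff_ofReal (.of_forall fun x => (Real.exp_pos _).le)]
    by_contra h
    have := prod_le c
    rw [not_lt_top_iff.1 h, ENNReal.top_mul (pos (-c))] at this
    simp at this
  have int : Integrable F μ := by
    refine ((exp_int 1).add (exp_int (-1))).mono' hF.aestronglyMeasurable (.of_forall fun x => ?_)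
    have h₁ := Real.add_one_le_exp (1 * F x)
    have h₂ := Real.add_one_le_exp (-1 * F x)
    have h₃ := Real.exp_pos (1 * F x)
    have h₄ := Real.exp_pos (-1 * F x)
    simp only [Pi.add_apply, Real.norm_eq_abs, abs_le]
    constructor <;> linarith
  set m := ∫ y, F y ∂μ with hm
  have mgf_le : ∀ c : ℝ, mgf F μ c ≤ Real.exp (c ^ 2 * V + c * m) := by
    intro c
    have jensen : Real.exp (-c * m) ≤ ∫ x, Real.exp (-c * F x) ∂μ := by
      rw [hm, ← integral_const_mul]
      exact convexOn_exp.map_integral_le Real.continuous_exp.continuousOn isClosed_univ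
        (.of_forall fun _ => Set.mem_univ _) (int.const_mul _) (exp_int (-c))
    have h := prod_le c
    rw [← ofReal_integral_eq_lintegral_ofReal (exp_int c) (.of_forall fun x => (Real.exp_pos _).le),
      ← ofReal_integral_eq_lintegral_ofReal (exp_int (-c))
        (.of_forall fun x => (Real.exp_pos _).le),
      ← ENNReal.ofReal_mul (integral_nonneg fun x => (Real.exp_pos _).le),
      ENNReal.ofReal_le_ofReal_iff (Real.exp_pos _).le] at h
    have h' : mgf F μ c * Real.exp (-c * m) ≤ Real.exp (c ^ 2 * V) :=
      (mul_le_mul_of_nonneg_left jensen mgf_nonneg).trans h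
    calc mgf F μ c = mgf F μ c * Real.exp (-c * m) * Real.exp (c * m) := by
          rw [mul_assoc, ← Real.exp_add]; simp
      _ ≤ Real.exp (c ^ 2 * V) * Real.exp (c * m) := by gcongr
      _ = _ := by rw [← Real.exp_add]
  -- the exponent `-c s + c² V` is minimised at `c = s / (2 V)`
  have opt : (s / (2 * V)) ^ 2 * V - s / (2 * V) * s = -s ^ 2 / (4 * V) := by
    field_simp; ring
  have c0 : 0 ≤ s / (2 * V) := by positivity
  have upper : μ.real {x | m + s ≤ F x} ≤ Real.exp (-s ^ 2 / (4 * V)) := by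
    refine (measure_ge_le_exp_mul_mgf (m + s) c0 (exp_int _)).trans ?_
    refine (mul_le_mul_of_nonneg_left (mgf_le _) (Real.exp_pos _).le).trans ?_
    rw [← Real.exp_add, ← opt]
    exact Real.exp_le_exp.2 (le_of_eq (by ring))
  have lower : μ.real {x | F x ≤ m - s} ≤ Real.exp (-s ^ 2 / (4 * V)) := by
    refine (measure_le_le_exp_mul_mgf (m - s) (neg_nonpos.2 c0) (exp_int _)).trans ?_
    refine (mul_le_mul_of_nonneg_left (mgf_le _) (Real.exp_pos _).le).trans ?_
    rw [← Real.exp_add, ← opt]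
    exact Real.exp_le_exp.2 (le_of_eq (by ring))
  rw [← ofReal_measureReal (measure_ne_top _ _)]
  refine ENNReal.ofReal_le_ofReal ?_
  calc μ.real {x | s ≤ |F x - m|} ≤ μ.real ({x | m + s ≤ F x} ∪ {x | F x ≤ m - s}) := by
        refine measureReal_mono (fun x hx => ?_) (measure_ne_top _ _)
        rcases le_abs.1 (show s ≤ |F x - m| from hx) with h | h
        · left; simp only [Set.mem_ofPred_eq]; linarith
        · right; simp only [Set.mem_ofPred_eq]; linarith
    _ ≤ _ := (measureReal_union_le _ _).trans (by linarith)

/-! ### The Lipschitz bound for the logarithm of the determinant -/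

lemma sqrt_smul_one_add_det_ne_zero {N : ℕ} {Y : Matrix (Fin N) (Fin N) ℝ} (hY : Yᵀ = -Y)
    {t : ℝ} (ht : 0 < t) : (√t • (1 : Matrix (Fin N) (Fin N) ℝ) + Y).det ≠ 0 := by
  intro h
  obtain ⟨v, hv, hv0⟩ := Matrix.exists_mulVec_eq_zero_iff.2 h
  have skew : v ⬝ᵥ Y *ᵥ v = 0 := by
    have : v ⬝ᵥ Y *ᵥ v = -(v ⬝ᵥ Y *ᵥ v) := by
      conv_lhs => rw [Matrix.dotProduct_mulVec, ← Matrix.mulVec_transpose, hY, Matrix.neg_mulVec,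
        neg_dotProduct, dotProduct_comm]
    linarith
  have h1 := congrArg (fun w => v ⬝ᵥ w) hv0
  simp only [Matrix.add_mulVec, dotProduct_add, skew, Matrix.smul_mulVec, Matrix.one_mulVec,
    dotProduct_smul, add_zero, dotProduct_zero, smul_eq_mul, mul_eq_zero,
    (Real.sqrt_pos.2 ht).ne', false_or, dotProduct_self_eq_zero] at h1
  exact hv h1

/-- Jacobi's formula along a line through an invertible matrix. -/
lemma hasDerivAt_det_line {N : ℕ} (M D : Matrix (Fin N) (Fin N) ℝ) (hM : M.det ≠ 0) :
    HasDerivAt (fun τ : ℝ => (M + τ • D).det) (M.det * (M⁻¹ * D).trace) 0 := by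
  have e : (fun τ : ℝ => (M + τ • D).det) = fun τ => M.det * (1 + (M⁻¹ * D).trace * τ +
      (Matrix.det (1 + (Polynomial.X : Polynomial ℝ) •
        (M⁻¹ * D).map Polynomial.C)).divX.divX.eval τ * τ ^ 2) := by
    funext τ
    rw [← Matrix.det_one_add_smul, ← Matrix.det_mul, Matrix.mul_add, Matrix.mul_one,
      Matrix.mul_smul, ← Matrix.mul_assoc, Matrix.mul_nonsing_inv _ (isUnit_iff_ne_zero.2 hM),
      Matrix.one_mul]
  rw [e]
  generalize (Matrix.det (1 + (Polynomial.X : Polynomial ℝ) •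
        (M⁻¹ * D).map Polynomial.C)).divX.divX = p
  have h := ((((hasDerivAt_id (0 : ℝ)).const_mul (M⁻¹ * D).trace).const_add 1).add
    ((p.hasDerivAt 0).mul (hasDerivAt_pow 2 (0 : ℝ)))).const_mul M.det
  simpa using h

/-- Cauchy–Schwarz for the Frobenius inner product. -/
lemma trace_mul_sq_le {N : ℕ} (B D : Matrix (Fin N) (Fin N) ℝ) :
    (B * D).trace ^ 2 ≤ (B * Bᵀ).trace * (D * Dᵀ).trace := by
  have h := Finset.sum_mul_sq_le_sq_mul_sq Finset.univ
    (fun p : Fin N × Fin N => B p.1 p.2) (fun p => D p.2 p.1)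
  have e₁ : (B * D).trace = ∑ p : Fin N × Fin N, B p.1 p.2 * D p.2 p.1 := by
    simp [Matrix.trace, Matrix.mul_apply, Fintype.sum_prod_type]
  have e₂ : (B * Bᵀ).trace = ∑ p : Fin N × Fin N, B p.1 p.2 ^ 2 := by
    simp [Matrix.trace, Matrix.mul_apply, Fintype.sum_prod_type, sq]
  have e₃ : (D * Dᵀ).trace = ∑ p : Fin N × Fin N, D p.2 p.1 ^ 2 := by
    simp [Matrix.trace, Matrix.mul_apply, Fintype.sum_prod_type_right, sq]
  rw [e₁, e₂, e₃]
  exact h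

/-- The gradient bound for `log det` at `√t I + Y` in a skew-symmetric direction `D`. -/
lemma trace_inv_mul_sq_le {N : ℕ} {Y D : Matrix (Fin N) (Fin N) ℝ} (hY : Yᵀ = -Y)
    (hD : Dᵀ = -D) {t : ℝ} (ht : 0 < t) :
    ((√t • (1 : Matrix (Fin N) (Fin N) ℝ) + Y)⁻¹ * D).trace ^ 2
      ≤ N / (4 * t) * (D * Dᵀ).trace := by
  set M := √t • (1 : Matrix (Fin N) (Fin N) ℝ) + Y with hM
  have hdet : IsUnit M.det := isUnit_iff_ne_zero.2 (sqrt_smul_one_add_det_ne_zero hY ht)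
  have hst : √t ≠ 0 := (Real.sqrt_pos.2 ht).ne'
  have hsum : M + Mᵀ = (2 * √t) • (1 : Matrix (Fin N) (Fin N) ℝ) := by
    rw [hM, Matrix.transpose_add, hY, Matrix.transpose_smul, Matrix.transpose_one, two_mul,
      add_smul]
    abel
  set B := M⁻¹ with hB
  have hBM : B * M = 1 := Matrix.nonsing_inv_mul _ hdet
  have hMB : Mᵀ * Bᵀ = 1 := by rw [← Matrix.transpose_mul, hBM, Matrix.transpose_one]
  have hBB : B + Bᵀ = (2 * √t) • (B * Bᵀ) := by
    calc B + Bᵀ = B * (M + Mᵀ) * Bᵀ := by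
          rw [Matrix.mul_add, Matrix.add_mul, hBM, Matrix.mul_assoc B Mᵀ, hMB, Matrix.one_mul,
            Matrix.mul_one, add_comm]
      _ = _ := by rw [hsum]; simp
  set c := (2 * √t)⁻¹ with hc
  have hc2 : c * c = (4 * t)⁻¹ := by
    rw [hc, ← mul_inv]; congr 1
    nlinarith [Real.mul_self_sqrt ht.le]
  have hcc : c * (2 * √t) = 1 := inv_mul_cancel₀ (by positivity)
  -- `B'` is the multiple `1 / (2 √t)` of an orthogonal matrix.
  set B' := B - c • (1 : Matrix (Fin N) (Fin N) ℝ) with hB'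
  have hB'B' : B' * B'ᵀ = (4 * t)⁻¹ • (1 : Matrix (Fin N) (Fin N) ℝ) := by
    have : B' * B'ᵀ = B * Bᵀ - c • (B + Bᵀ) + (c * c) • (1 : Matrix (Fin N) (Fin N) ℝ) := by
      simp only [hB', Matrix.transpose_sub, Matrix.transpose_smul, Matrix.transpose_one,
        Matrix.sub_mul, Matrix.mul_sub, Matrix.smul_mul, Matrix.mul_smul, Matrix.one_mul,
        Matrix.mul_one, smul_sub, smul_add, smul_smul]
      abel
    rw [this, hBB, smul_smul, hcc, one_smul, sub_self, zero_add, hc2]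
  have hDtr : D.trace = 0 := by
    have := congrArg Matrix.trace hD
    rw [Matrix.trace_transpose, Matrix.trace_neg] at this
    linarith
  have htr : (B * D).trace = (B' * D).trace := by
    simp [hB', Matrix.sub_mul, hDtr]
  rw [htr]
  refine (trace_mul_sq_le B' D).trans (le_of_eq ?_)
  rw [hB'B', Matrix.trace_smul, Matrix.trace_one, Fintype.card_fin, smul_eq_mul]
  ring

lemma sampleY_transpose {N : ℕ} {A : Matrix (Fin N) (Fin N) ℝ} (hA : Aᵀ = -A)
    (ξ : PairIdx N → ℝ) : (sampleY A ξ)ᵀ = -sampleY A ξ := by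
  ext i j
  have h : A j i = -A i j := congrFun (congrFun hA i) j
  simp only [sampleY, Matrix.transpose_apply, Matrix.of_apply, Matrix.neg_apply]
  rcases lt_trichotomy i j with hij | rfl | hij
  · simp [hij, hij.not_gt, h]
  · simp
  · simp [hij, hij.not_gt, h]

lemma sampleY_add_smul {N : ℕ} (A : Matrix (Fin N) (Fin N) ℝ) (ξ δ : PairIdx N → ℝ) (τ : ℝ) :
    sampleY A (ξ + τ • δ) = sampleY A ξ + τ • sampleY A δ := by
  ext i j
  simp only [sampleY, Matrix.of_apply, Matrix.add_apply, Matrix.smul_apply, Pi.add_apply,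
    Pi.smul_apply, smul_eq_mul]
  split_ifs <;> ring

lemma trace_sampleY_mul_transpose_le {N : ℕ} {A : Matrix (Fin N) (Fin N) ℝ} {a : ℝ}
    (ha : ∀ i j, |A i j| ≤ a) (δ : PairIdx N → ℝ) :
    (sampleY A δ * (sampleY A δ)ᵀ).trace ≤ 2 * a ^ 2 * ∑ p, δ p ^ 2 := by
  have hsq : ∀ i j, A i j ^ 2 ≤ a ^ 2 := fun i j => sq_le_sq' (abs_le.1 (ha i j)).1
    (abs_le.1 (ha i j)).2
  have e : (sampleY A δ * (sampleY A δ)ᵀ).trace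
      = ∑ p : Fin N × Fin N, sampleY A δ p.1 p.2 ^ 2 := by
    simp [Matrix.trace, Matrix.mul_apply, Fintype.sum_prod_type, sq]
  -- `U` bounds the squared entries above the diagonal, and its swap those below.
  set U : Fin N × Fin N → ℝ := fun p => if h : p.1 < p.2 then a ^ 2 * δ ⟨p, h⟩ ^ 2 else 0 with hU
  have hUsum : ∑ p, U p = a ^ 2 * ∑ p, δ p ^ 2 := by
    rw [Finset.mul_sum, ← Finset.sum_filter_of_ne (p := fun p : Fin N × Fin N => p.1 < p.2)
      (fun p _ hp => by by_contra h; exact hp (dif_neg h)),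
      Finset.sum_subtype (p := fun p : Fin N × Fin N => p.1 < p.2) _ (by simp) U]
    exact Finset.sum_congr rfl fun p _ => dif_pos p.2
  have hle : ∀ p : Fin N × Fin N, sampleY A δ p.1 p.2 ^ 2 ≤ U p + U p.swap := by
    rintro ⟨i, j⟩
    simp only [sampleY, hU, Matrix.of_apply, Prod.swap_prod_mk]
    rcases lt_trichotomy i j with hij | rfl | hij
    · simp only [hij, hij.not_gt, dif_pos, dif_neg, not_false_eq_true, add_zero, mul_pow]
      exact mul_le_mul_of_nonneg_right (hsq i j) (sq_nonneg _)
    · simp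
    · simp only [hij, hij.not_gt, dif_pos, dif_neg, not_false_eq_true, zero_add, mul_pow]
      exact mul_le_mul_of_nonneg_right (hsq i j) (sq_nonneg _)
  have hswap : ∑ p : Fin N × Fin N, U p.swap = ∑ p, U p :=
    (Equiv.prodComm (Fin N) (Fin N)).sum_comp U
  rw [e]
  refine (Finset.sum_le_sum fun p _ => hle p).trans (le_of_eq ?_)
  rw [Finset.sum_add_distrib, hswap, hUsum]
  ring

/-- `log det (√t I + Y_A)` is Lipschitz with squared constant `N a² / (2 t)` in the Euclidean distance.
The determinant never vanishes, so `Real.log` is differentiable along the whole segment. -/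
lemma logDet_lipschitz {N : ℕ} {A : Matrix (Fin N) (Fin N) ℝ} (hA : Aᵀ = -A)
    {a : ℝ} (ha : ∀ i j, |A i j| ≤ a) {t : ℝ} (ht : 0 < t) (x y : PairIdx N → ℝ) :
    (Real.log ((√t • (1 : Matrix (Fin N) (Fin N) ℝ) + sampleY A x).det) -
      Real.log ((√t • (1 : Matrix (Fin N) (Fin N) ℝ) + sampleY A y).det)) ^ 2
      ≤ N * a ^ 2 / (2 * t) * ∑ p, (x p - y p) ^ 2 := by
  set δ : PairIdx N → ℝ := x - y with hδ
  set M : ℝ → Matrix (Fin N) (Fin N) ℝ := fun τ => √t • 1 + sampleY A (y + τ • δ) with hM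
  have hdet : ∀ τ, (M τ).det ≠ 0 := fun τ =>
    sqrt_smul_one_add_det_ne_zero (sampleY_transpose hA _) ht
  have hderiv : ∀ τ, HasDerivAt (fun τ => Real.log (M τ).det)
      (((M τ)⁻¹ * sampleY A δ).trace) τ := by
    intro τ
    have h := hasDerivAt_det_line (M τ) (sampleY A δ) (hdet τ)
    have h2 : HasDerivAt (fun τ => (M τ).det) ((M τ).det * ((M τ)⁻¹ * sampleY A δ).trace) τ := by
      have e : (fun τ' => (M τ').det) = fun τ' => (M τ + (τ' - τ) • sampleY A δ).det := by
        funext τ'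
        simp only [hM, sampleY_add_smul, sub_smul]
        congr 1
        abel
      rw [e]
      have h3 : HasDerivAt (fun σ : ℝ => (M τ + σ • sampleY A δ).det)
          ((M τ).det * ((M τ)⁻¹ * sampleY A δ).trace) (τ - τ) := by
        rw [sub_self]; exact h
      exact h3.comp_sub_const τ τ
    have h4 := h2.log (hdet τ)
    rwa [mul_div_cancel_left₀ _ (hdet τ)] at h4
  obtain ⟨τ, -, hτ⟩ := exists_hasDerivAt_eq_slope (fun τ => Real.log (M τ).det) _ zero_lt_one
    (fun τ _ => (hderiv τ).continuousAt.continuousWithinAt) (fun τ _ => hderiv τ)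
  have e1 : M 1 = √t • 1 + sampleY A x := by simp [hM, hδ]
  have e0 : M 0 = √t • 1 + sampleY A y := by simp [hM]
  simp only [sub_zero, div_one, e1, e0] at hτ
  rw [← hτ]
  refine (trace_inv_mul_sq_le (sampleY_transpose hA _) (sampleY_transpose hA _) ht).trans ?_
  refine (mul_le_mul_of_nonneg_left (trace_sampleY_mul_transpose_le ha δ) (by positivity)).trans
    (le_of_eq ?_)
  simp only [hδ, Pi.sub_apply]
  field_simp
  ring

lemma continuous_sampleY {N : ℕ} (A : Matrix (Fin N) (Fin N) ℝ) : Continuous (sampleY A) := by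
  refine continuous_matrix fun i j => ?_
  simp only [sampleY, Matrix.of_apply]
  split_ifs <;> fun_prop

/-! ### Concentration of the logarithm of the determinant -/

/-- concentration of `log det(√t I_N + Y_A)` for Gaussian entries:
`Pr(|log det(√t I + Y_A) - E log det(√t I + Y_A)| ≥ Nr) ≤ 2 exp(-tNr²/(2a²))`. -/
theorem concentration_log_det
    {N : ℕ} (A : Matrix (Fin N) (Fin N) ℝ) (hA : Aᵀ = -A) (hA0 : A ≠ 0)
    (a : ℝ) (ha : ∀ i j, |A i j| ≤ a) (ha' : ∃ i j, |A i j| = a)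
    (t : ℝ) (ht : 0 < t) (r : ℝ) (hr : 0 < r) :
    gaussPi N {ξ | (N : ℝ) * r ≤
        |Real.log ((Real.sqrt t • (1 : Matrix (Fin N) (Fin N) ℝ) + sampleY A ξ).det) -
          logPhiTilde t A|} ≤
      ENNReal.ofReal (2 * Real.exp (-(t * N * r ^ 2) / (2 * a ^ 2))) := by
  obtain ⟨i, j, hij⟩ : ∃ i j, A i j ≠ 0 := by
    by_contra! h
    exact hA0 (Matrix.ext h)
  have ha0 : 0 < a := (abs_pos.2 hij).trans_le (ha i j)
  have hN : 0 < (N : ℝ) := by exact_mod_cast i.pos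
  have hmeas : Measurable fun ξ : PairIdx N → ℝ =>
      Real.log ((√t • (1 : Matrix (Fin N) (Fin N) ℝ) + sampleY A ξ).det) :=
    Real.measurable_log.comp
      (continuous_const.add (continuous_sampleY A)).matrix_det.measurable
  have h := gaussian_concentration hmeas (V := N * a ^ 2 / (2 * t)) (by positivity)
    (logDet_lipschitz hA ha ht) (s := N * r) (by positivity)
  refine h.trans (le_of_eq ?_)
  congr 3
  field_simp
  norm_num
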